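/- Let p be an odd prime, let G be a finite group of order divisible by p, and let S be a Sylow p-subgroup of G that is split metacyclic, with E = Ω1(S) not contained in Z(S). Assume G has no proper strongly p-embedded subgroup. Let Z = E ∩ Z(S) and fix a subgroup Q of E of order p with Q not contained in Z(S). Then the Grodal subgroup R of N_G(S) is the subgroup generated by N_G(S) ∩ O^{p'}(N_G(Z)) together with all elements g of N_G(S) that can be written as a product g = h·h'·t with h ∈ O^{p'}(N_G(E)) ∩ C_G(Q), h' ∈ O^{p'}(C_G(Q)) and t ∈ S. -/

import Mathlib

open Subgroup

/-- A `p`-group is split metacyclic if it is the internal semidirect product of a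
cyclic normal subgroup by a cyclic subgroup. -/
def IsSplitMetacyclic (H : Type*) [Group H] : Prop :=
  ∃ C K : Subgroup H, ∃ _ : C.Normal,
    IsCyclic C ∧ IsCyclic K ∧ C ⊓ K = ⊥ ∧ C ⊔ K = ⊤

/-- `Ω₁(S)`: the subgroup generated by the elements of `S` of order dividing `p`. -/
def omega1 {G : Type*} [Group G] (p : ℕ) (S : Subgroup G) : Subgroup G :=
  Subgroup.closure {g : G | g ∈ S ∧ g ^ p = 1}

/-- `O^{p'}(H)`: the subgroup generated by the elements of `H` of `p`-power order. -/
def pResidual {G : Type*} [Group G] (p : ℕ) (H : Subgroup G) : Subgroup G :=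
  Subgroup.closure {g : G | g ∈ H ∧ ∃ n : ℕ, g ^ p ^ n = 1}

/-- `H` is a strongly `p`-embedded subgroup of `G`. -/
def IsStronglyPEmbedded {G : Type*} [Group G] (p : ℕ) (H : Subgroup G) : Prop :=
  p ∣ Nat.card H ∧ ∀ g : G, g ∉ H →
    ¬p ∣ Nat.card (H ⊓ Subgroup.map (MulAut.conj g).toMonoidHom H : Subgroup G)

/-- The product `g₁ ⋯ g_i` of the first `i` values of the sequence `g₁, g₂, …`. -/
def partialProd {G : Type*} [Group G] (gs : ℕ → G) (i : ℕ) : G :=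
  ((List.range i).map fun j => gs (j + 1)).prod

/-- The generators of the Grodal subgroup of `N_G(S)`. -/
def GrodalGenerators {G : Type*} [Group G] (p : ℕ) (S : Subgroup G) : Set G :=
  {g : G | g ∈ Subgroup.normalizer (S : Set G) ∧ ∃ n : ℕ, 1 ≤ n ∧ ∃ Q : ℕ → Subgroup G, ∃ gs : ℕ → G,
    (∀ i ≤ n, Q i ≠ ⊥ ∧ Q i ≤ S) ∧
    (∀ i, 1 ≤ i → i ≤ n → gs i ∈ pResidual p (Subgroup.normalizer (Q i : Set G))) ∧
    g = partialProd gs n ∧ Q 0 ≤ Q 1 ∧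
    (∀ i, 1 ≤ i → i ≤ n - 1 →
      ∀ x ∈ Q 0, (partialProd gs i)⁻¹ * x * partialProd gs i ∈ Q (i + 1))}

/-- The Grodal subgroup `R` of `N_G(S)`. -/
def grodalSubgroup {G : Type*} [Group G] (p : ℕ) (S : Subgroup G) : Subgroup G :=
  Subgroup.closure (GrodalGenerators p S)

/-
Write `E = Ω₁(S)` and `Z = E ∩ Z(S)`. The group `E` is elementary abelian of order `p ^ 2`, and
there are `q ∈ E` outside `Z`, a generator `z` of `Z` and a power `N` of `p` such that `z` is an
`N`-th power in `S` and `s⁻¹ q s = q s ^ N` for every `s ∈ S`. If `N_G(E)` did not normalize `Z`,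
then transvections of `E` with respect to `Z` and a conjugate of `Z` would produce an element of
`G` inverting `E`. Conjugation by it preserves the stabilizer of the series `1 ≤ Z ≤ E`, of which
`S` is a Sylow subgroup; after a correction within that stabilizer it carries some `x ∈ S` with
`x ^ N = z` to an `s ∈ S` with `s ^ N = z⁻¹` and `s⁻¹ q s = q z`. Hence `z ^ 2 = 1`, contrary to `p`
being odd, and so `N_G(E) ≤ N_G(Z)`.

A product `g₁ ⋯ g_n` as in the definition of the Grodal subgroup moves an element `a` of order `p`
stepwise within `S`, and each factor lies in `O^{p'}(N_G(E))` or in `O^{p'}(C_G(b))` for the current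
conjugate `b` of `a`. If `a ∈ Z`, this keeps the product in `O^{p'}(N_G(Z))`. Otherwise, as `S`
permutes the coset `a Z` transitively, one may assume `a ∈ Q`, and a Frattini argument in
`O^{p'}(N_G(E))` absorbs each factor into the normal form `h h' t`.
-/

lemma geom_sum_range_mul {R : Type*} [CommSemiring R] (r : R) (m n : ℕ) :
    ∑ i ∈ Finset.range (m * n), r ^ i =
      (∑ i ∈ Finset.range m, r ^ i) * ∑ i ∈ Finset.range n, (r ^ m) ^ i := by
  induction n with
  | zero => simp
  | succ n ih =>
    rw [Nat.mul_succ, Finset.sum_range_add, ih, Finset.sum_range_succ, mul_add]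
    simp only [pow_add, pow_mul, Finset.sum_mul, mul_comm]

lemma exists_geom_sum_eq_mul_of_odd {p : ℕ} (hp : Odd p) {r : ℤ} (hr : (p : ℤ) ∣ r - 1) :
    ∃ n : ℤ, (p : ℤ) ∣ n - 1 ∧ ∑ i ∈ Finset.range p, r ^ i = p * n := by
  obtain ⟨b, hb⟩ := hr
  obtain ⟨c, hc⟩ := odd_sq_dvd_geom_sum₂_sub (1 : ℤ) b hp
  rw [← hb, add_sub_cancel] at hc
  simp only [one_pow, mul_one] at hc
  exact ⟨1 + p * c, ⟨c, by ring⟩, by linear_combination hc⟩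

lemma exists_geom_sum_pow_eq_mul_of_odd {p : ℕ} (hp : Odd p) {r : ℤ} (hr : (p : ℤ) ∣ r - 1)
    (k : ℕ) : ∃ n : ℤ, (p : ℤ) ∣ n - 1 ∧ ∑ i ∈ Finset.range (p ^ k), r ^ i = p ^ k * n := by
  induction k with
  | zero => exact ⟨1, by simp⟩
  | succ k ih =>
    obtain ⟨m, hm, hsum⟩ := ih
    obtain ⟨n, hn, hsum'⟩ := exists_geom_sum_eq_mul_of_odd hp
      (hr.trans (by simpa using sub_dvd_pow_sub_pow r 1 (p ^ k)))
    refine ⟨m * n, ?_, by rw [pow_succ, geom_sum_range_mul, hsum, hsum']; ring⟩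
    have hmn : m * n - 1 = (m - 1) * n + (n - 1) := by ring
    exact hmn ▸ dvd_add (hm.mul_right n) hn

section Conjugation

variable {G : Type*} [Group G]

lemma pow_conj_eq_zpow_pow {w c : G} {r : ℤ} (h : w * c * w⁻¹ = c ^ r) (k : ℕ) :
    w ^ k * c * (w ^ k)⁻¹ = c ^ r ^ k := by
  induction k with
  | zero => simp
  | succ k ih =>
    calc w ^ (k + 1) * c * (w ^ (k + 1))⁻¹ = w * (w ^ k * c * (w ^ k)⁻¹) * w⁻¹ := by
          rw [pow_succ']; group
      _ = c ^ r ^ (k + 1) := by rw [ih, ← conj_zpow, h, ← zpow_mul, pow_succ']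

lemma inv_zpow_mul_mul_zpow_eq {s u z : G} (hsz : Commute s z) (h : s⁻¹ * u * s = u * z) (k : ℤ) :
    (s ^ k)⁻¹ * u * s ^ k = u * z ^ k := by
  have hs : u⁻¹ * s⁻¹ * u = z * s⁻¹ := by
    rw [eq_mul_inv_iff_mul_eq, mul_assoc, mul_assoc, inv_mul_eq_iff_eq_mul, ← mul_assoc, h]
  have hsk : u⁻¹ * (s ^ k)⁻¹ * u = z ^ k * (s ^ k)⁻¹ := by
    calc u⁻¹ * (s ^ k)⁻¹ * u = (u⁻¹ * s⁻¹ * u⁻¹⁻¹) ^ k := by rw [conj_zpow, inv_zpow, inv_inv]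
      _ = z ^ k * (s ^ k)⁻¹ := by rw [inv_inv, hs, hsz.symm.inv_right.mul_zpow, inv_zpow]
  calc (s ^ k)⁻¹ * u * s ^ k = u * (u⁻¹ * (s ^ k)⁻¹ * u) * s ^ k := by group
    _ = u * z ^ k := by rw [hsk]; group

lemma mul_pow_eq_zpow_geom_sum_mul {w c : G} {r : ℤ} (h : w * c * w⁻¹ = c ^ r) (n : ℕ) :
    (c * w) ^ n = c ^ (∑ i ∈ Finset.range n, r ^ i) * w ^ n := by
  induction n with
  | zero => simp
  | succ n ih =>
    rw [pow_succ, ih, Finset.sum_range_succ, zpow_add, ← pow_conj_eq_zpow_pow h n, pow_succ]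
    group

lemma zpow_eq_self_of_dvd_sub_one {p : ℕ} {a : G} (ha : a ^ p = 1) {n : ℤ}
    (hn : (p : ℤ) ∣ n - 1) : a ^ n = a := by
  obtain ⟨m, hm⟩ := hn
  rw [eq_add_of_sub_eq hm, zpow_add_one, zpow_mul, zpow_natCast, ha, one_zpow, one_mul]

variable {p : ℕ} [Fact p.Prime]

lemma eq_one_of_zpow_eq_one_of_dvd_sub_one (hG : IsPGroup p G) {a : G} {n : ℤ}
    (hn : (p : ℤ) ∣ n - 1) (ha : a ^ n = 1) : a = 1 := by
  have hp : Prime (p : ℤ) := Nat.prime_iff_prime_int.mp Fact.out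
  obtain ⟨k, hk⟩ := IsPGroup.iff_orderOf.mp hG a
  rw [← orderOf_dvd_iff_zpow_eq_one, hk, Nat.cast_pow] at ha
  have hk0 : k = 0 := by
    by_contra hk0
    have hpn : (p : ℤ) ∣ n := (dvd_pow_self _ hk0).trans ha
    exact hp.not_dvd_one ((dvd_sub_right hpn).mp hn)
  rw [← orderOf_eq_one_iff, hk, hk0, pow_zero]

lemma conj_eq_self_of_mem_zpowers {k q : G} {n : ℕ} (hk : k ^ p ^ n = 1) (hq : q ^ p = 1)
    (h : k * q * k⁻¹ ∈ zpowers q) : k * q * k⁻¹ = q := by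
  obtain ⟨r, hr : q ^ r = k * q * k⁻¹⟩ := h
  have hfix : q ^ r ^ p ^ n = q := by rw [← pow_conj_eq_zpow_pow hr.symm, hk]; simp
  have hfermat : (p : ℤ) ∣ r ^ p ^ n - r := by
    rw [← ZMod.intCast_zmod_eq_zero_iff_dvd, Int.cast_sub, Int.cast_pow, ZMod.pow_card_pow,
      sub_self]
  have hdvd : (orderOf q : ℤ) ∣ r ^ p ^ n - r :=
    (Int.natCast_dvd_natCast.mpr (orderOf_dvd_of_pow_eq_one hq)).trans hfermat
  rw [← hr, zpow_eq_zpow_iff_modEq.mpr (Int.modEq_iff_dvd.mpr hdvd), hfix]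

lemma mem_zpowers_of_isCyclic {K : Type*} [Group K] [Finite K] [IsCyclic K]
    (hK : IsPGroup p K) {a b : K} (ha : a ≠ 1) (hb : b ^ p = 1) : b ∈ zpowers a := by
  classical
  have hp : p.Prime := Fact.out
  have := Fintype.ofFinite K
  obtain ⟨n, hn⟩ := IsPGroup.iff_orderOf.mp hK a
  have hdvd : p ∣ orderOf a := by
    rw [hn]
    refine dvd_pow_self p fun h0 => ha (orderOf_eq_one_iff.mp ?_)
    rw [hn, h0, pow_zero]
  set c := a ^ (orderOf a / p)
  have hcp : orderOf c = p := orderOf_pow_orderOf_div (orderOf_pos a).ne' hdvd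
  have hsub : (zpowers c : Set K).toFinset ⊆ ({x : K | x ^ p = 1} : Finset K) := by
    intro x hx
    obtain ⟨k, rfl⟩ := mem_zpowers_iff.mp (Set.mem_toFinset.mp hx)
    simp only [Finset.mem_filter_univ]
    rw [← zpow_natCast, zpow_comm, zpow_natCast, ← hcp, pow_orderOf_eq_one, one_zpow]
  have hcard : ({x : K | x ^ p = 1} : Finset K).card ≤ (zpowers c : Set K).toFinset.card := by
    refine (IsCyclic.card_pow_eq_one_le hp.pos).trans_eq ?_
    rw [Set.toFinset_card, ← Nat.card_eq_fintype_card]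
    exact hcp.symm.trans (Nat.card_zpowers c).symm
  have hbc : b ∈ zpowers c := by
    rw [← SetLike.mem_coe, ← Set.mem_toFinset, Finset.eq_of_subset_of_card_le hsub hcard]
    simpa using hb
  exact (zpowers_le.mpr (pow_mem (mem_zpowers a) _)) hbc

lemma mem_zpowers_of_mem_isCyclic {K : Subgroup G} [Finite K] [IsCyclic K] (hK : IsPGroup p K)
    {a b : G} (haK : a ∈ K) (hbK : b ∈ K) (ha : a ≠ 1) (hb : b ^ p = 1) : b ∈ zpowers a := by
  obtain ⟨k, hk⟩ := mem_zpowers_of_isCyclic hK (a := ⟨a, haK⟩) (b := ⟨b, hbK⟩)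
    (by simpa [Subgroup.mk_eq_one] using ha) (Subtype.ext hb)
  exact ⟨k, congrArg Subtype.val hk⟩

end Conjugation

/-- A pair `(q, z)` of elements of order `p` that generates `Ω₁(S)`, where `z` is central in `S` and
the commutator of `q` with any `s ∈ S` is the power `s ^ N`. This is the only information about a
split metacyclic `S` that the fusion arguments need. -/
structure IsOmegaFrame {G : Type*} [Group G] (p N : ℕ) (S : Subgroup G) (q z : G) : Prop where
  orderOf_left : orderOf q = p
  orderOf_right : orderOf z = p
  left_mem : q ∈ S
  commute_right : ∀ s ∈ S, Commute s z
  omega1_eq : omega1 p S = zpowers q ⊔ zpowers z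
  conj_left_eq : ∀ s ∈ S, s⁻¹ * q * s = q * s ^ N
  exists_pow_eq : ∃ s ∈ S, s ^ N = z

section SplitMetacyclic

variable {p : ℕ} [Fact p.Prime] {H : Type*} [Group H] [Finite H] {C K : Subgroup H} [C.Normal]
  [IsCyclic C]

lemma mem_center_of_mem_normal_isCyclic (hH : IsPGroup p H) {c : H} (hc : c ∈ C)
    (hcp : c ^ p = 1) : c ∈ center H := by
  refine mem_center_iff.mpr fun w => mul_inv_eq_iff_eq_mul.mp ?_
  rcases eq_or_ne c 1 with rfl | hc1
  · simp
  obtain ⟨n, hn⟩ := hH w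
  have hconj : (w * c * w⁻¹) ^ p = 1 := by rw [conj_pow, hcp, mul_one, mul_inv_cancel]
  exact conj_eq_self_of_mem_zpowers hn hcp <| mem_zpowers_of_mem_isCyclic (hH.to_subgroup C) hc
    (Normal.conj_mem inferInstance c hc w) hc1 hconj

lemma exists_forall_mem_conj_eq_zpow (hH : IsPGroup p H) (C : Subgroup H) [C.Normal] [IsCyclic C]
    (w : H) : ∃ r : ℤ, (p : ℤ) ∣ r - 1 ∧ ∀ c ∈ C, w * c * w⁻¹ = c ^ r := by
  obtain ⟨r, hr⟩ := MonoidHom.map_cyclic (MulAut.conjNormal (H := C) w).toMonoidHom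
  have hr' : ∀ c ∈ C, w * c * w⁻¹ = c ^ r := fun c hc => congrArg Subtype.val (hr ⟨c, hc⟩)
  rcases (hH.to_subgroup C).card_eq_or_dvd with hC | hC
  · refine ⟨1, by simp, fun c hc => ?_⟩
    rw [card_eq_one.mp hC, mem_bot] at hc
    simp [hc]
  · obtain ⟨⟨c, hc⟩, hcp⟩ := exists_prime_orderOf_dvd_card' p hC
    rw [orderOf_mk] at hcp
    have hcomm := mem_center_iff.mp
      (mem_center_of_mem_normal_isCyclic hH hc (hcp ▸ pow_orderOf_eq_one c)) w
    refine ⟨r, ?_, hr'⟩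
    rw [← hcp, orderOf_dvd_iff_zpow_eq_one, zpow_sub_one, ← hr' c hc, hcomm]
    group

lemma exists_forall_mem_mul_pow_eq (hp : Odd p) (hH : IsPGroup p H) (C : Subgroup H) [C.Normal]
    [IsCyclic C] (w : H) (k : ℕ) :
    ∃ n : ℤ, (p : ℤ) ∣ n - 1 ∧ ∀ c ∈ C, (c * w) ^ p ^ k = c ^ (p ^ k * n) * w ^ p ^ k := by
  obtain ⟨r, hr1, hr⟩ := exists_forall_mem_conj_eq_zpow hH C w
  obtain ⟨n, hn1, hn⟩ := exists_geom_sum_pow_eq_mul_of_odd hp hr1 k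
  exact ⟨n, hn1, fun c hc => by rw [mul_pow_eq_zpow_geom_sum_mul (hr c hc), hn]⟩

lemma pow_eq_one_of_mul_pow_eq_one (hp : Odd p) (hH : IsPGroup p H) (hCK : Disjoint C K) {c w : H}
    (hc : c ∈ C) (hw : w ∈ K) (hcw : (c * w) ^ p = 1) : c ^ p = 1 ∧ w ^ p = 1 := by
  obtain ⟨n, hn1, hn⟩ := exists_forall_mem_mul_pow_eq hp hH C w 1
  simp only [pow_one] at hn
  obtain ⟨hcn, hwp⟩ := disjoint_iff_mul_eq_one.mp hCK (zpow_mem hc _) (pow_mem hw p)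
    ((hn c hc).symm.trans hcw)
  rw [zpow_mul, zpow_natCast] at hcn
  exact ⟨eq_one_of_zpow_eq_one_of_dvd_sub_one hH hn1 hcn, hwp⟩

lemma commute_pow_of_card_eq (hH : IsPGroup p H) {M : ℕ} (hC : Nat.card C = p ^ (M + 1)) {c : H}
    (hc : c ∈ C) (w : H) : Commute (w ^ p ^ M) c := by
  obtain ⟨r, hr1, hr⟩ := exists_forall_mem_conj_eq_zpow hH C w
  have hdvd : (orderOf c : ℤ) ∣ r ^ p ^ M - 1 := by
    have h := dvd_sub_pow_of_dvd_sub hr1 M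
    rw [one_pow, ← Nat.cast_pow, ← hC] at h
    exact (Int.natCast_dvd_natCast.mpr (C.orderOf_dvd_natCard hc)).trans h
  rw [commute_iff_eq, ← mul_inv_eq_iff_eq_mul, pow_conj_eq_zpow_pow (hr c hc),
    zpow_eq_zpow_iff_modEq.mpr (Int.modEq_iff_dvd.mpr hdvd).symm, zpow_one]

lemma mem_center_of_forall_commute_of_sup_eq_top {H : Type*} [Group H] {C K : Subgroup H}
    [IsMulCommutative K] (hCK : C ⊔ K = ⊤) {y : H} (hy : y ∈ K) (hyC : ∀ c ∈ C, Commute y c) :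
    y ∈ center H := by
  have hC : C ≤ centralizer {y} := fun c hc =>
    mem_centralizer_singleton_iff.mpr (hyC c hc).eq.symm
  have hK : K ≤ centralizer {y} := fun k hk =>
    mem_centralizer_singleton_iff.mpr (le_centralizer K hy k hk)
  refine mem_center_iff.mpr fun g => mem_centralizer_singleton_iff.mp (sup_le hC hK ?_)
  rw [hCK]
  exact mem_top g

lemma exists_mem_notMem_center (hp : Odd p) (hH : IsPGroup p H) (hdisj : Disjoint C K)
    (hCK : C ⊔ K = ⊤) (hΩ : ¬ omega1 p (⊤ : Subgroup H) ≤ center H) :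
    ∃ w ∈ K, w ^ p = 1 ∧ w ∉ center H := by
  by_contra! h
  refine hΩ ((closure_le _).mpr fun g hg => ?_)
  obtain ⟨c, hc, w, hw, rfl⟩ := mem_sup_of_normal_left.mp (hCK ▸ mem_top g)
  obtain ⟨hcp, hwp⟩ := pow_eq_one_of_mul_pow_eq_one hp hH hdisj hc hw hg.2
  exact mul_mem (mem_center_of_mem_normal_isCyclic hH hc hcp) (h w hw hwp)

variable [IsCyclic K]

lemma pow_eq_one_of_notMem_center (hH : IsPGroup p H) (hCK : C ⊔ K = ⊤) {M : ℕ}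
    (hC : Nat.card C = p ^ (M + 1)) {w : H} (hw : w ∈ K) (hwp : w ^ p = 1) (hwc : w ∉ center H)
    {y : H} (hy : y ∈ K) : y ^ p ^ M = 1 := by
  by_contra hne
  have hyc : y ^ p ^ M ∈ center H := mem_center_of_forall_commute_of_sup_eq_top hCK (pow_mem hy _)
    fun c hc => commute_pow_of_card_eq hH hC hc y
  exact hwc <| zpowers_le.mpr hyc <|
    mem_zpowers_of_mem_isCyclic (hH.to_subgroup K) (pow_mem hy _) hw hne hwp

lemma exists_mem_inv_mul_mul_eq_mul_pow (hp : Odd p) (hH : IsPGroup p H) (hdisj : Disjoint C K)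
    (hCK : C ⊔ K = ⊤) {M : ℕ} (hC : Nat.card C = p ^ (M + 1)) {x : H} (hx : zpowers x = C) {w : H}
    (hw : w ∈ K) (hwp : w ^ p = 1) (hwc : w ∉ center H) :
    ∃ q ∈ zpowers w, x⁻¹ * q * x = q * x ^ p ^ M := by
  have hxC : x ∈ C := hx ▸ mem_zpowers x
  obtain ⟨ζ, hζ⟩ : ∃ ζ, x⁻¹ * w * x = ζ * w := ⟨x⁻¹ * w * x * w⁻¹, by group⟩
  have hζC : ζ ∈ C := by
    have h := mul_mem (inv_mem hxC) (Normal.conj_mem inferInstance x hxC w)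
    rwa [← mul_assoc, ← mul_assoc, hζ, mul_inv_cancel_right] at h
  have hζp : ζ ^ p = 1 := by
    refine (pow_eq_one_of_mul_pow_eq_one hp hH hdisj hζC hw ?_).1
    simpa [hwp, hζ] using conj_pow (a := x⁻¹) (b := w) (i := p)
  have hζc := mem_center_of_mem_normal_isCyclic hH hζC hζp
  have hζ1 : ζ ≠ 1 := by
    rintro rfl
    refine hwc (mem_center_of_forall_commute_of_sup_eq_top hCK hw fun c hc => ?_)
    obtain ⟨k, rfl⟩ := mem_zpowers_iff.mp (hx ▸ hc)
    refine Commute.zpow_right ?_ k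
    rw [commute_iff_eq, ← inv_mul_eq_iff_eq_mul, ← mul_assoc, hζ, one_mul]
  have hzp : (x ^ p ^ M) ^ p = 1 := by
    rw [← pow_mul, ← pow_succ, ← hC, ← hx, Nat.card_zpowers, pow_orderOf_eq_one]
  obtain ⟨v, hv⟩ := mem_zpowers_iff.mp <|
    mem_zpowers_of_mem_isCyclic (hH.to_subgroup C) hζC (pow_mem hxC _) hζ1 hzp
  refine ⟨w ^ v, zpow_mem_zpowers w v, ?_⟩
  have hcomm : Commute ζ w := (mem_center_iff.mp hζc w).symm
  rw [← hv, ← (hcomm.zpow_zpow v v).eq, ← hcomm.mul_zpow, ← hζ]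
  simpa using (conj_zpow (a := x⁻¹) (b := w) (i := v)).symm

lemma forall_inv_mul_mul_eq_mul_pow (hp : Odd p) (hH : IsPGroup p H) (hCK : C ⊔ K = ⊤) {M : ℕ}
    (hC : Nat.card C = p ^ (M + 1)) (hK : ∀ y ∈ K, y ^ p ^ M = 1) {x q : H} (hx : zpowers x = C)
    (hq : q ∈ K) (hxq : x⁻¹ * q * x = q * x ^ p ^ M) (s : H) : s⁻¹ * q * s = q * s ^ p ^ M := by
  obtain ⟨c, hc, y, hy, rfl⟩ := mem_sup_of_normal_left.mp (hCK ▸ mem_top s)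
  obtain ⟨a, rfl⟩ := mem_zpowers_iff.mp (hx ▸ hc)
  obtain ⟨n, hn1, hn⟩ := exists_forall_mem_mul_pow_eq hp hH C y M
  have hxC : x ∈ C := hx ▸ mem_zpowers x
  set z := x ^ p ^ M with hz
  have hzp : z ^ p = 1 := by
    rw [hz, ← pow_mul, ← pow_succ, ← hC, ← hx, Nat.card_zpowers, pow_orderOf_eq_one]
  have hzc : z ∈ center H := mem_center_of_mem_normal_isCyclic hH (pow_mem hxC _) hzp
  have hpow : (x ^ a * y) ^ p ^ M = z ^ a := by
    rw [hn _ hc, hK y hy, mul_one, ← zpow_mul, mul_comm a, zpow_mul, zpow_mul, ← Nat.cast_pow,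
      zpow_natCast, ← hz, zpow_eq_self_of_dvd_sub_one hzp hn1]
  have hconj := inv_zpow_mul_mul_zpow_eq (mem_center_iff.mp hzc x) hxq a
  have hqy : q * y = y * q := le_centralizer K hy q hq
  have hzy : Commute y (z ^ a) := mem_center_iff.mp (zpow_mem hzc a) y
  calc (x ^ a * y)⁻¹ * q * (x ^ a * y) = y⁻¹ * ((x ^ a)⁻¹ * q * x ^ a) * y := by group
    _ = y⁻¹ * (q * z ^ a * y) := by rw [hconj, mul_assoc]
    _ = y⁻¹ * (y * q * z ^ a) := by rw [mul_assoc q, ← hzy.eq, ← mul_assoc q, hqy]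
    _ = q * (x ^ a * y) ^ p ^ M := by rw [hpow]; group

lemma omega1_top_eq_sup (hp : Odd p) (hH : IsPGroup p H) (hdisj : Disjoint C K) (hCK : C ⊔ K = ⊤)
    {z q : H} (hzC : z ∈ C) (hz : orderOf z = p) (hqK : q ∈ K) (hq : orderOf q = p) :
    omega1 p (⊤ : Subgroup H) = zpowers q ⊔ zpowers z := by
  have hne {g : H} (hg : orderOf g = p) : g ≠ 1 := by
    rintro rfl
    exact (Fact.out : p.Prime).ne_one (hg.symm.trans orderOf_one)
  apply le_antisymm
  · refine (closure_le _).mpr fun g hg => ?_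
    obtain ⟨c, hc, w, hw, rfl⟩ := mem_sup_of_normal_left.mp (hCK ▸ mem_top g)
    obtain ⟨hcp, hwp⟩ := pow_eq_one_of_mul_pow_eq_one hp hH hdisj hc hw hg.2
    exact mul_mem
      (mem_sup_right <| mem_zpowers_of_mem_isCyclic (hH.to_subgroup C) hzC hc (hne hz) hcp)
      (mem_sup_left <| mem_zpowers_of_mem_isCyclic (hH.to_subgroup K) hqK hw (hne hq) hwp)
  · exact sup_le (zpowers_le.mpr <| subset_closure ⟨mem_top q, hq ▸ pow_orderOf_eq_one q⟩)
      (zpowers_le.mpr <| subset_closure ⟨mem_top z, hz ▸ pow_orderOf_eq_one z⟩)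

end SplitMetacyclic

lemma IsSplitMetacyclic.exists_isOmegaFrame {p : ℕ} [Fact p.Prime] (hp : Odd p) {H : Type*}
    [Group H] [Finite H] (hH : IsPGroup p H) (hsplit : IsSplitMetacyclic H)
    (hΩ : ¬ omega1 p (⊤ : Subgroup H) ≤ center H) :
    ∃ (N : ℕ) (q z : H), IsOmegaFrame p N ⊤ q z := by
  obtain ⟨C, K, _, _, _, hdisj, hCK⟩ := hsplit
  rw [← disjoint_iff] at hdisj
  obtain ⟨w, hw, hwp, hwc⟩ := exists_mem_notMem_center hp hH hdisj hCK hΩ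
  obtain ⟨x, hx⟩ := (C.isCyclic_iff_exists_zpowers_eq_top).mp inferInstance
  have hCnontriv : Nontrivial C := by
    refine (nontrivial_iff_ne_bot C).mpr ?_
    rintro rfl
    exact hwc (mem_center_of_forall_commute_of_sup_eq_top hCK hw fun c hc =>
      mem_bot.mp hc ▸ Commute.one_right w)
  obtain ⟨M, hM, hC⟩ := (hH.to_subgroup C).nontrivial_iff_card.mp hCnontriv
  obtain ⟨M, rfl⟩ := Nat.exists_eq_succ_of_ne_zero hM.ne'
  obtain ⟨q, hqw, hxq⟩ := exists_mem_inv_mul_mul_eq_mul_pow hp hH hdisj hCK hC hx hw hwp hwc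
  have hqK : q ∈ K := zpowers_le.mpr hw hqw
  have hK := fun y => pow_eq_one_of_notMem_center hH hCK hC hw hwp hwc (y := y)
  have hxC : x ∈ C := hx ▸ mem_zpowers x
  have hz : orderOf (x ^ p ^ M) = p := by
    have hxord : orderOf x = p ^ M * p := by rw [← Nat.card_zpowers, hx, hC, pow_succ]
    have hpM : p ^ M ≠ 0 := pow_ne_zero M (Fact.out : p.Prime).ne_zero
    rw [orderOf_pow_of_dvd hpM (hxord ▸ dvd_mul_right _ _), hxord,
      Nat.mul_div_cancel_left p hpM.bot_lt]
  have hqp : orderOf q = p := by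
    obtain ⟨v, rfl⟩ := mem_zpowers_iff.mp hqw
    refine orderOf_eq_prime ?_ fun hq1 => ?_
    · rw [← zpow_natCast, zpow_comm, zpow_natCast, hwp, one_zpow]
    · rw [hq1, mul_one, inv_mul_cancel, one_mul, eq_comm, ← orderOf_eq_one_iff, hz] at hxq
      exact (Fact.out : p.Prime).ne_one hxq
  refine ⟨p ^ M, q, x ^ p ^ M, hqp, hz, mem_top q, fun s _ => ?_, ?_, fun s _ => ?_, x, mem_top x,
    rfl⟩
  · exact mem_center_iff.mp (mem_center_of_mem_normal_isCyclic hH (pow_mem hxC _)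
      (orderOf_dvd_iff_pow_eq_one.mp hz.dvd)) s
  · exact omega1_top_eq_sup hp hH hdisj hCK (pow_mem hxC _) hz hqK hqp
  · exact forall_inv_mul_mul_eq_mul_pow hp hH hCK hC hK hx hqK hxq s

lemma omega1_map {G G' : Type*} [Group G] [Group G'] (p : ℕ) (S : Subgroup G) {f : G →* G'}
    (hf : Function.Injective f) : omega1 p (S.map f) = (omega1 p S).map f := by
  rw [omega1, omega1, MonoidHom.map_closure]
  congr 1
  ext g
  constructor
  · rintro ⟨⟨s, hs, rfl⟩, hsp⟩
    exact ⟨s, ⟨hs, hf (by rw [map_pow, hsp, map_one])⟩, rfl⟩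
  · rintro ⟨s, ⟨hs, hsp⟩, rfl⟩
    exact ⟨mem_map_of_mem f hs, by rw [← map_pow, hsp, map_one]⟩

lemma IsOmegaFrame.map {G G' : Type*} [Group G] [Group G'] {p N : ℕ} {S : Subgroup G} {q z : G}
    (h : IsOmegaFrame p N S q z) {f : G →* G'} (hf : Function.Injective f) :
    IsOmegaFrame p N (S.map f) (f q) (f z) where
  orderOf_left := (orderOf_injective f hf q).trans h.orderOf_left
  orderOf_right := (orderOf_injective f hf z).trans h.orderOf_right
  left_mem := mem_map_of_mem f h.left_mem
  commute_right := by
    rintro _ ⟨s, hs, rfl⟩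
    exact (h.commute_right s hs).map f
  omega1_eq := by
    rw [omega1_map p S hf, h.omega1_eq, Subgroup.map_sup, MonoidHom.map_zpowers,
      MonoidHom.map_zpowers]
  conj_left_eq := by
    rintro _ ⟨s, hs, rfl⟩
    simpa only [map_mul, map_inv, map_pow] using congrArg f (h.conj_left_eq s hs)
  exists_pow_eq := by
    obtain ⟨s, hs, rfl⟩ := h.exists_pow_eq
    exact ⟨f s, mem_map_of_mem f hs, (map_pow f s N).symm⟩

lemma IsSplitMetacyclic.exists_isOmegaFrame_subgroup {p : ℕ} [Fact p.Prime] (hp : Odd p)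
    {G : Type*} [Group G] {S : Subgroup G} [Finite S] (hS : IsPGroup p S)
    (hsplit : IsSplitMetacyclic S) (hΩ : ¬ omega1 p S ≤ S ⊓ centralizer (S : Set G)) :
    ∃ (N : ℕ) (q z : G), IsOmegaFrame p N S q z := by
  have htop : (⊤ : Subgroup S).map S.subtype = S := by
    rw [← MonoidHom.range_eq_map, range_subtype]
  obtain ⟨N, q, z, h⟩ := hsplit.exists_isOmegaFrame hp hS fun hcenter => hΩ <| by
    rw [← htop, omega1_map p _ S.subtype_injective, htop]
    refine map_le_iff_le_comap.mpr fun s hs => ⟨s.2, fun t ht => ?_⟩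
    exact congrArg Subtype.val (mem_center_iff.mp (hcenter hs) ⟨t, ht⟩)
  have hmap := h.map S.subtype_injective
  rw [htop] at hmap
  exact ⟨N, q, z, hmap⟩

section Commuting

variable {G : Type*} [Group G] {A B : Subgroup G}

lemma card_sup_of_disjoint_of_commute (hAB : Disjoint A B)
    (hcomm : ∀ a ∈ A, ∀ b ∈ B, Commute a b) : Nat.card ↥(A ⊔ B) = Nat.card A * Nat.card B := by
  have hcomm' : ∀ (a : A) (b : B), Commute (A.subtype a) (B.subtype b) :=
    fun a b => hcomm a a.2 b b.2
  have hinj : Function.Injective (MonoidHom.noncommCoprod A.subtype B.subtype hcomm') := by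
    simpa [MonoidHom.noncommCoprod_injective] using hAB
  rw [← Nat.card_prod, Nat.card_congr (MonoidHom.ofInjective hinj).toEquiv,
    MonoidHom.noncommCoprod_range, range_subtype, range_subtype]

lemma exists_mul_eq_of_mem_sup_of_commute (hcomm : ∀ a ∈ A, ∀ b ∈ B, Commute a b) {x : G}
    (hx : x ∈ A ⊔ B) : ∃ a ∈ A, ∃ b ∈ B, a * b = x := by
  have hcomm' : ∀ (a : A) (b : B), Commute (A.subtype a) (B.subtype b) :=
    fun a b => hcomm a a.2 b b.2
  rw [← range_subtype A, ← range_subtype B,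
    ← MonoidHom.noncommCoprod_range A.subtype B.subtype hcomm'] at hx
  obtain ⟨⟨a, b⟩, rfl⟩ := hx
  exact ⟨a, a.2, b, b.2, rfl⟩

variable {p : ℕ} [Fact p.Prime]

lemma zpowers_eq_of_card_eq_prime (hA : Nat.card A = p) {a : G} (ha : a ∈ A) (ha1 : a ≠ 1) :
    zpowers a = A := by
  refine le_antisymm (zpowers_le.mpr ha) fun b hb => ?_
  obtain ⟨k, hk⟩ := mem_zpowers_of_prime_card hA (g := ⟨a, ha⟩) (g' := ⟨b, hb⟩)
    (by simpa [Subgroup.mk_eq_one] using ha1)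
  exact ⟨k, congrArg Subtype.val hk⟩

lemma disjoint_of_card_eq_prime (hA : Nat.card A = p) (hAB : ¬ A ≤ B) : Disjoint A B := by
  refine disjoint_def.mpr fun {x} hxA hxB => by_contra fun hx1 => hAB ?_
  rw [← zpowers_eq_of_card_eq_prime hA hxA hx1]
  exact zpowers_le.mpr hxB

lemma eq_of_card_eq_prime_of_le_of_ne {D : Subgroup G} (hA : Nat.card A = p) (hAB : A ≤ B)
    (hBD : B ≤ D) (hD : Nat.card D = p ^ 2) (hne : B ≠ D) : A = B := by
  have hp : p.Prime := Fact.out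
  have : Finite D := Nat.finite_of_card_ne_zero (hD ▸ pow_ne_zero 2 hp.ne_zero)
  have : Finite B := Finite.of_injective _ (inclusion_injective hBD)
  refine eq_of_le_of_card_ge hAB ?_
  obtain ⟨k, hk2, hk⟩ := (Nat.dvd_prime_pow hp).mp (hD ▸ card_dvd_of_le hBD)
  have hk_ne : k ≠ 2 := by
    rintro rfl
    exact hne (eq_of_le_of_card_ge hBD (by rw [hk, hD]))
  rw [hk, hA]
  exact (Nat.pow_le_pow_right hp.pos (by lia)).trans_eq (pow_one p)

lemma inv_mul_conj_mem_of_conj_eq_zpow_mul {k e a : G} {n : ℕ} {i : ℤ}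
    (hk : k ∈ normalizer (A : Set G)) (he : e ∈ normalizer (A : Set G)) (hkn : k ^ p ^ n = 1)
    (hep : e ^ p = 1) (ha : a ∈ A) (hke : k * e * k⁻¹ = e ^ i * a) : e⁻¹ * (k * e * k⁻¹) ∈ A := by
  set N := normalizer (A : Set G)
  let π := QuotientGroup.mk' (A.subgroupOf N)
  have haN : a ∈ N := le_normalizer ha
  have hπa : π ⟨a, haN⟩ = 1 := (QuotientGroup.eq_one_iff _).mpr ha
  have hπ : π (⟨k, hk⟩ * ⟨e, he⟩ * ⟨k, hk⟩⁻¹) = π ⟨e, he⟩ ^ i := by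
    rw [← map_zpow, ← mul_one (π (⟨e, he⟩ ^ i)), ← hπa, ← map_mul]
    exact congrArg π (Subtype.ext hke)
  have hfix : π ⟨k, hk⟩ * π ⟨e, he⟩ * (π ⟨k, hk⟩)⁻¹ = π ⟨e, he⟩ := by
    refine conj_eq_self_of_mem_zpowers (p := p) (n := n) ?_ ?_ ⟨i, ?_⟩
    · rw [← map_pow, ← map_one π]
      exact congrArg π (Subtype.ext hkn)
    · rw [← map_pow, ← map_one π]
      exact congrArg π (Subtype.ext hep)
    · rw [← map_inv, ← map_mul, ← map_mul, hπ]
  rw [← map_inv, ← map_mul, ← map_mul] at hfix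
  have hmem := QuotientGroup.eq.mp hfix.symm
  exact hmem

end Commuting

/-- A chain `Z ≤ E` of a subgroup of order `p` in an elementary abelian group of order `p ^ 2`;
applied to `E = Ω₁(S)` and `Z = E ∩ Z(S)`. -/
structure IsFlag {G : Type*} [Group G] (p : ℕ) (Z E : Subgroup G) : Prop where
  card_left : Nat.card Z = p
  card_right : Nat.card E = p ^ 2
  le : Z ≤ E
  pow_eq_one : ∀ e ∈ E, e ^ p = 1

/-- The subgroup of elements that act trivially by conjugation on `Z`, and trivially on the
cosets of `Z` in `E`: the stabilizer of the series `1 ≤ Z ≤ E`. -/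
def seriesStabilizer {G : Type*} [Group G] (Z E : Subgroup G) : Subgroup G where
  carrier := {g | (∀ z ∈ Z, g * z * g⁻¹ = z) ∧ ∀ e ∈ E, e⁻¹ * (g * e * g⁻¹) ∈ Z}
  one_mem' := by simp
  mul_mem' {g h} hg hh := by
    refine ⟨fun z hz => ?_, fun e he => ?_⟩
    · calc g * h * z * (g * h)⁻¹ = g * (h * z * h⁻¹) * g⁻¹ := by group
        _ = z := by rw [hh.1 z hz, hg.1 z hz]
    · have hgh : e⁻¹ * (g * h * e * (g * h)⁻¹) =
          e⁻¹ * (g * e * g⁻¹) * (g * (e⁻¹ * (h * e * h⁻¹)) * g⁻¹) := by group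
      rw [hgh, hg.1 _ (hh.2 e he)]
      exact mul_mem (hg.2 e he) (hh.2 e he)
  inv_mem' {g} hg := by
    have hfix : ∀ z ∈ Z, g⁻¹ * z * g⁻¹⁻¹ = z := fun z hz => by
      nth_rw 1 [← hg.1 z hz]
      group
    refine ⟨hfix, fun e he => ?_⟩
    have hinv : e⁻¹ * (g⁻¹ * e * g⁻¹⁻¹) = g⁻¹ * (e⁻¹ * (g * e * g⁻¹))⁻¹ * g⁻¹⁻¹ := by group
    rw [hinv, hfix _ (inv_mem (hg.2 e he))]
    exact inv_mem (hg.2 e he)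

namespace IsFlag

variable {G : Type*} [Group G] {p : ℕ} [Fact p.Prime] {Z E : Subgroup G}

lemma commute (h : IsFlag p Z E) {a b : G} (ha : a ∈ E) (hb : b ∈ E) : Commute a b := by
  have := IsPGroup.isMulCommutative_of_card_eq_prime_sq h.card_right
  exact le_centralizer E hb a ha

lemma zpowers_sup_eq (h : IsFlag p Z E) {a : G} (ha : a ∈ E) (haZ : a ∉ Z) :
    zpowers a ⊔ Z = E := by
  by_contra hne
  have hle : zpowers a ⊔ Z ≤ E := sup_le (zpowers_le.mpr ha) h.le
  have hZ := eq_of_card_eq_prime_of_le_of_ne h.card_left le_sup_right hle h.card_right hne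
  exact haZ (hZ ▸ mem_sup_left (mem_zpowers a))

lemma exists_zpow_mul_eq (h : IsFlag p Z E) {a b : G} (ha : a ∈ E) (haZ : a ∉ Z) (hb : b ∈ E) :
    ∃ k : ℤ, ∃ z ∈ Z, a ^ k * z = b := by
  obtain ⟨_, ⟨k, rfl⟩, z, hz, rfl⟩ := exists_mul_eq_of_mem_sup_of_commute
    (fun _ hx z hz => h.commute (zpowers_le.mpr ha hx) (h.le hz))
    ((h.zpowers_sup_eq ha haZ).symm ▸ hb)
  exact ⟨k, z, hz, rfl⟩

lemma mem_seriesStabilizer (h : IsFlag p Z E) {k : G} {n : ℕ} (hk : k ^ p ^ n = 1)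
    (hkE : k ∈ normalizer (E : Set G)) (hkZ : k ∈ normalizer (Z : Set G)) :
    k ∈ seriesStabilizer Z E := by
  have hfix : ∀ z ∈ Z, k * z * k⁻¹ = z := by
    intro z hz
    rcases eq_or_ne z 1 with rfl | hz1
    · simp
    refine conj_eq_self_of_mem_zpowers hk (h.pow_eq_one z (h.le hz)) ?_
    rw [zpowers_eq_of_card_eq_prime h.card_left hz hz1]
    exact (mem_normalizer_iff.mp hkZ z).mp hz
  refine ⟨hfix, fun e he => ?_⟩
  by_cases heZ : e ∈ Z
  · rw [hfix e heZ, inv_mul_cancel]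
    exact one_mem Z
  · obtain ⟨i, z, hz, hke⟩ := h.exists_zpow_mul_eq he heZ ((mem_normalizer_iff.mp hkE e).mp he)
    have heN : e ∈ normalizer (Z : Set G) := centralizer_le_normalizer _ fun z hz =>
      (h.commute (h.le hz) he).eq
    exact inv_mul_conj_mem_of_conj_eq_zpow_mul hkZ heN hk (h.pow_eq_one e he) hz hke.symm

lemma exists_zpow_conj_eq_mul (h : IsFlag p Z E) {s u z : G} (hs : s ∈ seriesStabilizer Z E)
    (hu : u ∈ E) (hsu : s⁻¹ * u * s ≠ u) (hz : z ∈ Z) :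
    ∃ k : ℤ, (s ^ k)⁻¹ * u * s ^ k = u * z := by
  obtain ⟨ζ, hζ, hsζ⟩ : ∃ ζ ∈ Z, s⁻¹ * u * s = u * ζ := by
    refine ⟨_, (inv_mem hs).2 u hu, ?_⟩
    group
  have hζ1 : ζ ≠ 1 := by
    rintro rfl
    exact hsu (hsζ.trans (mul_one u))
  obtain ⟨k, rfl⟩ := mem_zpowers_iff.mp ((zpowers_eq_of_card_eq_prime h.card_left hζ hζ1).ge hz)
  exact ⟨k, inv_zpow_mul_mul_zpow_eq (mul_inv_eq_iff_eq_mul.mp (hs.1 ζ hζ)) hsζ k⟩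

end IsFlag

lemma exists_conj_mem_of_sylow_le {p : ℕ} [Fact p.Prime] {G : Type*} [Group G] [Finite G]
    (S : Sylow p G) {L : Subgroup G} (hSL : (S : Subgroup G) ≤ L) {t : G} (htL : t ∈ L) {n : ℕ}
    (ht : t ^ p ^ n = 1) : ∃ l ∈ L, l⁻¹ * t * l ∈ (S : Subgroup G) := by
  have hP : IsPGroup p (zpowers (⟨t, htL⟩ : L)) := by
    refine IsPGroup.of_card_dvd_pow (n := n) ?_
    rw [Nat.card_zpowers]
    exact orderOf_dvd_of_pow_eq_one (Subtype.ext ht)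
  obtain ⟨P, hPP⟩ := hP.exists_le_sylow
  obtain ⟨l, hl⟩ := MulAction.exists_smul_eq L (S.subtype hSL) P
  have hmem : (⟨t, htL⟩ : L) ∈ (P : Subgroup L) := hPP (mem_zpowers _)
  rw [← hl, Sylow.coe_subgroup_smul, mem_pointwise_smul_iff_inv_smul_mem, ← map_inv,
    MulAut.smul_def, MulAut.conj_apply, Sylow.coe_subtype, mem_subgroupOf, inv_inv] at hmem
  exact ⟨l, l.2, hmem⟩

lemma exists_conj_eq_inv_of_transvections {G : Type*} [Group G] {a b u v : G} (hab : Commute a b)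
    (hua : u * a * u⁻¹ = a) (hub : u * b * u⁻¹ = b * a) (hva : v * a * v⁻¹ = a * b⁻¹)
    (hvb : v * b * v⁻¹ = b) : ∃ t : G, t * a * t⁻¹ = a⁻¹ ∧ t * b * t⁻¹ = b⁻¹ := by
  have ha : u * v * u * a * (u * v * u)⁻¹ = b⁻¹ := by
    calc u * v * u * a * (u * v * u)⁻¹ = u * (v * (u * a * u⁻¹) * v⁻¹) * u⁻¹ := by group
      _ = u * (a * b⁻¹) * u⁻¹ := by rw [hua, hva]
      _ = (u * a * u⁻¹) * (u * b * u⁻¹)⁻¹ := by group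
      _ = b⁻¹ := by rw [hua, hub]; group
  have hb : u * v * u * b * (u * v * u)⁻¹ = a := by
    calc u * v * u * b * (u * v * u)⁻¹ = u * (v * (u * b * u⁻¹) * v⁻¹) * u⁻¹ := by group
      _ = u * ((v * b * v⁻¹) * (v * a * v⁻¹)) * u⁻¹ := by rw [hub]; group
      _ = u * (b * a * b⁻¹) * u⁻¹ := by rw [hva, hvb]; group
      _ = a := by rw [← hab.eq, mul_inv_cancel_right, hua]
  set w := u * v * u
  refine ⟨w * w, ?_, ?_⟩
  · calc w * w * a * (w * w)⁻¹ = w * (w * a * w⁻¹) * w⁻¹ := by group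
      _ = (w * b * w⁻¹)⁻¹ := by rw [ha]; group
      _ = a⁻¹ := by rw [hb]
  · calc w * w * b * (w * w)⁻¹ = w * (w * b * w⁻¹) * w⁻¹ := by group
      _ = b⁻¹ := by rw [hb, ha]

namespace IsFlag

variable {G : Type*} [Group G] {p : ℕ} [Fact p.Prime] {Z E : Subgroup G}

lemma finite_left (h : IsFlag p Z E) : Finite Z :=
  Nat.finite_of_card_ne_zero (h.card_left ▸ (Fact.out : p.Prime).ne_zero)

lemma mem_normalizer_of_conj_mem (h : IsFlag p Z E) {g z : G} (hz : z ∈ Z) (hz1 : z ≠ 1)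
    (hgz : g * z * g⁻¹ ∈ Z) : g ∈ normalizer (Z : Set G) := by
  have := h.finite_left
  have : Finite (Z : Set G) := this
  refine mem_normalizer_fintype fun x hx => ?_
  obtain ⟨k, rfl⟩ := mem_zpowers_iff.mp ((zpowers_eq_of_card_eq_prime h.card_left hz hz1).ge hx)
  rw [← conj_zpow]
  exact zpow_mem hgz k

lemma exists_zpow_conj_eq_mul_of_notMem (h : IsFlag p Z E) {s u : G}
    (hs : s ∈ seriesStabilizer Z E) (hu : u ∈ E) (hsu : s⁻¹ * u * s ≠ u) {b ζ : G} (hb : b ∈ E)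
    (hbZ : b ∉ Z) (hζ : ζ ∈ Z) : ∃ k : ℤ, (s ^ k)⁻¹ * b * s ^ k = b * ζ := by
  refine h.exists_zpow_conj_eq_mul hs hb (fun hsb => hsu ?_) hζ
  obtain ⟨k, c, hc, rfl⟩ := h.exists_zpow_mul_eq hb hbZ hu
  have hsc := (inv_mem hs).1 c hc
  rw [inv_inv] at hsc
  calc s⁻¹ * (b ^ k * c) * s = (s⁻¹ * b * s⁻¹⁻¹) ^ k * (s⁻¹ * c * s) := by
        rw [conj_zpow]; group
    _ = b ^ k * c := by rw [inv_inv, hsb, hsc]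

lemma forall_conj_eq_inv (h : IsFlag p Z E) {c z t : G} (hc : c ∈ E) (hcZ : c ∉ Z) (hz : z ∈ Z)
    (hz1 : z ≠ 1) (htc : t * c * t⁻¹ = c⁻¹) (htz : t * z * t⁻¹ = z⁻¹) :
    ∀ e ∈ E, t * e * t⁻¹ = e⁻¹ := by
  intro e he
  obtain ⟨k, ζ, hζ, rfl⟩ := h.exists_zpow_mul_eq hc hcZ he
  obtain ⟨m, rfl⟩ := mem_zpowers_iff.mp ((zpowers_eq_of_card_eq_prime h.card_left hz hz1).ge hζ)
  calc t * (c ^ k * z ^ m) * t⁻¹ = (t * c ^ k * t⁻¹) * (t * z ^ m * t⁻¹) := by group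
    _ = c⁻¹ ^ k * z⁻¹ ^ m := by rw [← conj_zpow, ← conj_zpow, htc, htz]
    _ = (z ^ m * c ^ k)⁻¹ := by rw [inv_zpow, inv_zpow, mul_inv_rev]
    _ = (c ^ k * z ^ m)⁻¹ := by rw [((h.commute hc (h.le hz)).zpow_zpow k m).eq]

lemma exists_forall_conj_eq_inv (h : IsFlag p Z E) {s u g : G} (hs : s ∈ seriesStabilizer Z E)
    (hu : u ∈ E) (hsu : s⁻¹ * u * s ≠ u) (hg : g ∈ normalizer (E : Set G))
    (hgZ : g ∉ normalizer (Z : Set G)) : ∃ t : G, ∀ e ∈ E, t * e * t⁻¹ = e⁻¹ := by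
  obtain ⟨z, hz, hz1⟩ : ∃ z ∈ Z, z ≠ 1 :=
    ⟨_, (inv_mem hs).2 u hu, by rwa [inv_inv, Ne, inv_mul_eq_one, eq_comm]⟩
  have hcE : g * z * g⁻¹ ∈ E := (mem_normalizer_iff.mp hg z).mp (h.le hz)
  have hcZ : g * z * g⁻¹ ∉ Z := fun hc => hgZ (h.mem_normalizer_of_conj_mem hz hz1 hc)
  have hdE : g⁻¹ * z * g ∈ E := (mem_normalizer_iff''.mp hg z).mp (h.le hz)
  have hdZ : g⁻¹ * z * g ∉ Z := fun hd => hgZ <| inv_mem_iff.mp <|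
    h.mem_normalizer_of_conj_mem hz hz1 (by rwa [inv_inv])
  obtain ⟨i, hi⟩ := h.exists_zpow_conj_eq_mul_of_notMem hs hu hsu hcE hcZ hz
  obtain ⟨j, hj⟩ := h.exists_zpow_conj_eq_mul_of_notMem hs hu hsu hdE hdZ (inv_mem hz)
  obtain ⟨t, htz, htc⟩ := exists_conj_eq_inv_of_transvections (u := (s ^ i)⁻¹)
    (v := g * (s ^ j)⁻¹ * g⁻¹) (h.commute (h.le hz) hcE)
    ((inv_mem (zpow_mem hs i)).1 z hz) (by rwa [inv_inv])
    (by
      calc _ = g * ((s ^ j)⁻¹ * (g⁻¹ * z * g) * s ^ j) * g⁻¹ := by group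
        _ = z * (g * z * g⁻¹)⁻¹ := by rw [hj]; group)
    (by
      calc _ = g * ((s ^ j)⁻¹ * z * (s ^ j)⁻¹⁻¹) * g⁻¹ := by group
        _ = g * z * g⁻¹ := by rw [(inv_mem (zpow_mem hs j)).1 z hz])
  exact ⟨t, h.forall_conj_eq_inv hcE hcZ hz hz1 htc htz⟩

end IsFlag

lemma conj_mem_seriesStabilizer_of_forall_conj_eq_inv {G : Type*} [Group G] {Z E : Subgroup G}
    (hZE : Z ≤ E) {t x : G} (ht : ∀ e ∈ E, t * e * t⁻¹ = e⁻¹) (hx : x ∈ seriesStabilizer Z E) :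
    t * x * t⁻¹ ∈ seriesStabilizer Z E := by
  have hxE : ∀ e ∈ E, x * e * x⁻¹ ∈ E := fun e he => by
    simpa using mul_mem he (hZE (hx.2 e he))
  have hconj : ∀ e ∈ E, t * x * t⁻¹ * e * (t * x * t⁻¹)⁻¹ = x * e * x⁻¹ := fun e he => by
    have hte : t⁻¹ * e * t = e⁻¹ := by
      calc t⁻¹ * e * t = t⁻¹ * (t * e⁻¹ * t⁻¹) * t := by rw [ht _ (inv_mem he), inv_inv]
        _ = e⁻¹ := by group
    calc t * x * t⁻¹ * e * (t * x * t⁻¹)⁻¹ = t * (x * (t⁻¹ * e * t) * x⁻¹) * t⁻¹ := by group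
      _ = (x * e⁻¹ * x⁻¹)⁻¹ := by rw [hte, ht _ (hxE _ (inv_mem he))]
      _ = x * e * x⁻¹ := by group
  refine ⟨fun z hz => ?_, fun e he => ?_⟩
  · rw [hconj z (hZE hz), hx.1 z hz]
  · rw [hconj e he]
    exact hx.2 e he

lemma normalizer_le_normalizer_omega1 {G : Type*} [Group G] (p : ℕ) (S : Subgroup G) :
    normalizer (S : Set G) ≤ normalizer (omega1 p S : Set G) := by
  refine le_trans (fun g hg => ?_) (normalizer_le_normalizer_closure {g : G | g ∈ S ∧ g ^ p = 1})
  rw [mem_normalizer_iff] at hg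
  rw [mem_set_normalizer_iff]
  refine fun x => and_congr (hg x) ?_
  rw [conj_pow, conj_eq_one_iff]

namespace IsOmegaFrame

variable {G : Type*} [Group G] {p N : ℕ} {S : Subgroup G} {q z : G}

lemma right_mem (h : IsOmegaFrame p N S q z) : z ∈ S := by
  obtain ⟨s, hs, rfl⟩ := h.exists_pow_eq
  exact pow_mem hs N

lemma left_mem_omega1 (h : IsOmegaFrame p N S q z) : q ∈ omega1 p S :=
  subset_closure ⟨h.left_mem, h.orderOf_left ▸ pow_orderOf_eq_one q⟩

lemma exists_mem_conj_left_eq_mul_right (h : IsOmegaFrame p N S q z) :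
    ∃ x ∈ S, x ^ N = z ∧ x⁻¹ * q * x = q * z := by
  obtain ⟨x, hx, hxz⟩ := h.exists_pow_eq
  exact ⟨x, hx, hxz, hxz ▸ h.conj_left_eq x hx⟩

lemma zpowers_right_le_centralizer (h : IsOmegaFrame p N S q z) :
    zpowers z ≤ centralizer (S : Set G) :=
  zpowers_le.mpr fun s hs => h.commute_right s hs

lemma right_mul_right_eq_one_of_conj (h : IsOmegaFrame p N S q z) {x τ ζ : G} (hxz : x ^ N = z)
    (hxq : x⁻¹ * q * x = q * z) (hs : τ * x * τ⁻¹ ∈ S) (hτz : τ * z * τ⁻¹ = z⁻¹)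
    (hζ : ζ ∈ zpowers z) (hτq : τ * q * τ⁻¹ = q⁻¹ * ζ) : z * z = 1 := by
  set s := τ * x * τ⁻¹ with hsx
  have hsN : s ^ N = z⁻¹ := by rw [hsx, conj_pow, hxz, hτz]
  have hsζ : s⁻¹ * ζ * s = ζ := by
    rw [mul_assoc, ← h.zpowers_right_le_centralizer hζ s hs, inv_mul_cancel_left]
  have hsq : s⁻¹ * q⁻¹ * s * ζ = q⁻¹ * ζ * z⁻¹ := by
    calc s⁻¹ * q⁻¹ * s * ζ = s⁻¹ * (q⁻¹ * ζ) * s := by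
          nth_rw 1 [← hsζ]
          group
      _ = τ * (x⁻¹ * q * x) * τ⁻¹ := by
          rw [← hτq, hsx]
          group
      _ = (τ * q * τ⁻¹) * (τ * z * τ⁻¹) := by
          rw [hxq]
          group
      _ = q⁻¹ * ζ * z⁻¹ := by rw [hτq, hτz]
  have hsq' : s⁻¹ * q⁻¹ * s = z * q⁻¹ := by
    calc s⁻¹ * q⁻¹ * s = (s⁻¹ * q * s)⁻¹ := by group
      _ = z * q⁻¹ := by rw [h.conj_left_eq s hs, hsN, mul_inv_rev, inv_inv]
  have hqζ : q⁻¹ * ζ ∈ S := mul_mem (inv_mem h.left_mem) (zpowers_le.mpr h.right_mem hζ)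
  rw [hsq', mul_assoc, ← h.commute_right _ hqζ, mul_right_inj] at hsq
  exact mul_eq_one_iff_eq_inv.mpr hsq

variable [Fact p.Prime]

lemma right_ne_one (h : IsOmegaFrame p N S q z) : z ≠ 1 := by
  rintro rfl
  exact (Fact.out : p.Prime).ne_one (h.orderOf_right.symm.trans orderOf_one)

lemma exists_mem_conj_left_ne (h : IsOmegaFrame p N S q z) : ∃ x ∈ S, x⁻¹ * q * x ≠ q := by
  obtain ⟨x, hx, -, hxq⟩ := h.exists_mem_conj_left_eq_mul_right
  exact ⟨x, hx, fun hq => h.right_ne_one (mul_eq_left.mp (hxq.symm.trans hq))⟩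

lemma left_notMem_centralizer (h : IsOmegaFrame p N S q z) : q ∉ centralizer (S : Set G) := by
  obtain ⟨x, hx, hxq⟩ := h.exists_mem_conj_left_ne
  refine fun hq => hxq ?_
  rw [mul_assoc, ← hq x hx, inv_mul_cancel_left]

lemma isFlag (h : IsOmegaFrame p N S q z) : IsFlag p (zpowers z) (omega1 p S) := by
  have hqz : Commute q z := h.commute_right q h.left_mem
  have hcomm : ∀ a ∈ zpowers q, ∀ b ∈ zpowers z, Commute a b := by
    rintro _ ⟨i, rfl⟩ _ ⟨j, rfl⟩
    exact hqz.zpow_zpow i j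
  have hq : Nat.card (zpowers q) = p := (Nat.card_zpowers q).trans h.orderOf_left
  have hz : Nat.card (zpowers z) = p := (Nat.card_zpowers z).trans h.orderOf_right
  refine ⟨hz, ?_, h.omega1_eq ▸ le_sup_right, fun e he => ?_⟩
  · rw [h.omega1_eq, card_sup_of_disjoint_of_commute _ hcomm, hq, hz, sq]
    exact disjoint_of_card_eq_prime hq fun hle => h.left_notMem_centralizer
      (h.zpowers_right_le_centralizer (hle (mem_zpowers q)))
  · obtain ⟨a, ha, b, hb, rfl⟩ := exists_mul_eq_of_mem_sup_of_commute hcomm (h.omega1_eq ▸ he)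
    rw [(hcomm a ha b hb).mul_pow, orderOf_dvd_iff_pow_eq_one.mp, orderOf_dvd_iff_pow_eq_one.mp,
      one_mul]
    · exact hz ▸ orderOf_dvd_natCard _ hb
    · exact hq ▸ orderOf_dvd_natCard _ ha

lemma omega1_inf_center_eq (h : IsOmegaFrame p N S q z) :
    omega1 p S ⊓ (S ⊓ centralizer (S : Set G)) = zpowers z := by
  symm
  refine eq_of_card_eq_prime_of_le_of_ne h.isFlag.card_left
    (le_inf h.isFlag.le (le_inf (zpowers_le.mpr h.right_mem) h.zpowers_right_le_centralizer))
    inf_le_left h.isFlag.card_right fun heq => h.left_notMem_centralizer ?_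
  exact (inf_le_right.trans inf_le_right : _ ≤ centralizer (S : Set G))
    (heq.ge h.left_mem_omega1)

lemma le_seriesStabilizer (h : IsOmegaFrame p N S q z) (hS : IsPGroup p S) :
    S ≤ seriesStabilizer (zpowers z) (omega1 p S) := by
  intro s hs
  obtain ⟨n, hn⟩ := hS ⟨s, hs⟩
  refine h.isFlag.mem_seriesStabilizer (n := n) (congrArg Subtype.val hn)
    (normalizer_le_normalizer_omega1 p S (le_normalizer hs)) ?_
  refine centralizer_le_normalizer _ ?_
  exact le_centralizer_iff.mp h.zpowers_right_le_centralizer hs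

lemma not_forall_conj_eq_inv [Finite G] (hp : Odd p) {S : Sylow p G} (h : IsOmegaFrame p N S q z)
    (t : G) : ¬ ∀ e ∈ omega1 p (S : Subgroup G), t * e * t⁻¹ = e⁻¹ := by
  intro ht
  have hSL := h.le_seriesStabilizer S.isPGroup'
  obtain ⟨x, hx, hxz, hxq⟩ := h.exists_mem_conj_left_eq_mul_right
  obtain ⟨n, hn⟩ := S.isPGroup' ⟨x, hx⟩
  obtain ⟨l, hl, hs⟩ := exists_conj_mem_of_sylow_le S hSL
    (conj_mem_seriesStabilizer_of_forall_conj_eq_inv h.isFlag.le ht (hSL hx))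
    (n := n) (by rw [conj_pow, show x ^ p ^ n = 1 from congrArg Subtype.val hn]; group)
  have hτ : ∀ e ∈ omega1 p (S : Subgroup G),
      l⁻¹ * t * e * (l⁻¹ * t)⁻¹ = l⁻¹ * e⁻¹ * l⁻¹⁻¹ := fun e he => by
    rw [← ht e he]
    group
  have hzz : z * z = 1 := by
    refine h.right_mul_right_eq_one_of_conj (τ := l⁻¹ * t) hxz hxq ?_ ?_
      ((inv_mem hl).2 q⁻¹ (inv_mem h.left_mem_omega1)) ?_
    · convert hs using 1
      group
    · rw [hτ z (h.isFlag.le (mem_zpowers z)),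
        (inv_mem hl).1 z⁻¹ (inv_mem (mem_zpowers z))]
    · rw [hτ q h.left_mem_omega1]
      group
  have hp2 : p ∣ 2 := by
    rw [← h.orderOf_right, orderOf_dvd_iff_pow_eq_one, sq, hzz]
  exact (Fact.out : p.Prime).ne_one (hp.coprime_two_right.eq_one_of_dvd hp2)

theorem normalizer_omega1_le [Finite G] (hp : Odd p) {S : Sylow p G} (h : IsOmegaFrame p N S q z) :
    normalizer (omega1 p (S : Subgroup G) : Set G) ≤ normalizer (zpowers z : Set G) := by
  by_contra hle
  obtain ⟨g, hg, hgz⟩ := SetLike.not_le_iff_exists.mp hle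
  obtain ⟨x, hx, hxq⟩ := h.exists_mem_conj_left_ne
  obtain ⟨t, ht⟩ := h.isFlag.exists_forall_conj_eq_inv (h.le_seriesStabilizer S.isPGroup' hx)
    h.left_mem_omega1 hxq hg hgz
  exact h.not_forall_conj_eq_inv hp t ht

end IsOmegaFrame

section PResidual

variable {G : Type*} [Group G] {p : ℕ} {H K : Subgroup G}

lemma pResidual_le (p : ℕ) (H : Subgroup G) : pResidual p H ≤ H :=
  (closure_le _).mpr fun _ hg => hg.1

lemma pResidual_mono (hHK : H ≤ K) : pResidual p H ≤ pResidual p K :=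
  closure_mono fun _ hg => ⟨hHK hg.1, hg.2⟩

lemma le_pResidual_of_isPGroup (hH : IsPGroup p H) (hHK : H ≤ K) : H ≤ pResidual p K := by
  intro g hg
  obtain ⟨n, hn⟩ := hH ⟨g, hg⟩
  exact subset_closure ⟨hHK hg, n, congrArg Subtype.val hn⟩

lemma conj_mem_pResidual {k : G} (hk : ∀ g ∈ H, k * g * k⁻¹ ∈ K) {g : G}
    (hg : g ∈ pResidual p H) : k * g * k⁻¹ ∈ pResidual p K := by
  suffices pResidual p H ≤ (pResidual p K).comap (MulAut.conj k).toMonoidHom from this hg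
  refine (closure_le _).mpr fun x hx => ?_
  obtain ⟨hxH, n, hn⟩ := hx
  exact subset_closure ⟨hk x hxH, n, by simp [hn]⟩

lemma centralizer_singleton_le_normalizer_zpowers (a : G) :
    centralizer {a} ≤ normalizer (zpowers a : Set G) := by
  rw [← centralizer_closure, ← zpowers_eq_closure]
  exact centralizer_le_normalizer _

lemma pResidual_normalizer_zpowers_le [Fact p.Prime] {a : G} (ha : a ^ p = 1) :
    pResidual p (normalizer (zpowers a : Set G)) ≤ pResidual p (centralizer {a}) := by
  refine closure_mono fun k hk => ?_
  obtain ⟨hka, n, hn⟩ := hk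
  refine ⟨mem_centralizer_singleton_iff.mpr (mul_inv_eq_iff_eq_mul.mp ?_), n, hn⟩
  exact conj_eq_self_of_mem_zpowers hn ha ((mem_normalizer_iff.mp hka a).mp (mem_zpowers a))

end PResidual

/-- The elements `g₁ ⋯ g_n` that conjugate `a` stepwise within `S`, where `g_i` lies in
`O^{p'}(N_G(T))` for some `T ≤ S` that contains the conjugate of `a` by `g₁ ⋯ g_{i-1}`. -/
inductive IsFusionWalk {G : Type*} [Group G] (p : ℕ) (S : Subgroup G) (a : G) : G → Prop
  | one : IsFusionWalk p S a 1
  | mul {w g : G} {T : Subgroup G} (hw : IsFusionWalk p S a w) (hTS : T ≤ S)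
      (hwT : w⁻¹ * a * w ∈ T) (hg : g ∈ pResidual p (normalizer (T : Set G))) :
      IsFusionWalk p S a (w * g)

namespace IsFusionWalk

variable {G : Type*} [Group G] {p : ℕ} {S : Subgroup G} {a v w : G}

lemma zpow (h : IsFusionWalk p S a w) (k : ℤ) : IsFusionWalk p S (a ^ k) w := by
  induction h with
  | one => exact one
  | @mul w _ _ _ hTS hwT hg ih =>
    have hconj : w⁻¹ * a ^ k * w = (w⁻¹ * a * w) ^ k := by
      simpa using (conj_zpow (a := w⁻¹) (b := a) (i := k)).symm
    exact ih.mul hTS (hconj ▸ zpow_mem hwT k) hg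

lemma trans (hv : IsFusionWalk p S a v) (hw : IsFusionWalk p S (v⁻¹ * a * v) w) :
    IsFusionWalk p S a (v * w) := by
  induction hw with
  | one => rwa [mul_one]
  | mul _ hTS hwT hg ih =>
    rw [← mul_assoc]
    refine ih.mul hTS ?_ hg
    simpa only [mul_inv_rev, mul_assoc] using hwT

end IsFusionWalk

lemma partialProd_succ {G : Type*} [Group G] (gs : ℕ → G) (i : ℕ) :
    partialProd gs (i + 1) = partialProd gs i * gs (i + 1) := by
  simp [partialProd, List.range_succ]

lemma exists_mem_orderOf_eq_of_isPGroup {G : Type*} [Group G] {p : ℕ} [Fact p.Prime]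
    {S : Subgroup G} (hS : IsPGroup p S) (hS1 : S ≠ ⊥) : ∃ a ∈ S, orderOf a = p := by
  obtain ⟨⟨x, hx⟩, hx1⟩ := (S.ne_bot_iff_exists_ne_one).mp hS1
  have hfin := (hS.isOfFinOrder (Fact.out : p.Prime).ne_zero ⟨x, hx⟩).orderOf_pos.ne'
  have hdvd := hS.dvd_orderOf hx1
  rw [orderOf_mk] at hfin hdvd
  exact ⟨_, pow_mem hx _, orderOf_pow_orderOf_div hfin hdvd⟩

lemma exists_isFusionWalk_of_mem_grodalGenerators {G : Type*} [Group G] {p : ℕ} [Fact p.Prime]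
    {S : Subgroup G} (hS : IsPGroup p S) {g : G} (hg : g ∈ GrodalGenerators p S) :
    ∃ a ∈ S, orderOf a = p ∧ IsFusionWalk p S a g := by
  obtain ⟨-, n, -, Q, gs, hQ, hgs, rfl, hQ01, hchain⟩ := hg
  obtain ⟨hQ0, hQ0S⟩ := hQ 0 n.zero_le
  obtain ⟨a, ha, hap⟩ := exists_mem_orderOf_eq_of_isPGroup (hS.to_le hQ0S) hQ0
  refine ⟨a, hQ0S ha, hap, ?_⟩
  suffices ∀ i ≤ n, IsFusionWalk p S a (partialProd gs i) from this n le_rfl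
  intro i
  induction i with
  | zero => exact fun _ => .one
  | succ i ih =>
    intro hi
    rw [partialProd_succ]
    refine (ih (by lia)).mul (hQ (i + 1) hi).2 ?_ (hgs (i + 1) (by lia) hi)
    rcases Nat.eq_zero_or_pos i with rfl | hi0
    · simpa [partialProd] using hQ01 ha
    · exact hchain i hi0 (by lia) a ha

section GrodalGenerators

variable {G : Type*} [Group G] {p : ℕ} {S P T : Subgroup G}

lemma mem_grodalGenerators_of_mem_pResidual (hT : T ≠ ⊥) (hTS : T ≤ S) {g : G}
    (hgS : g ∈ normalizer (S : Set G)) (hg : g ∈ pResidual p (normalizer (T : Set G))) :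
    g ∈ GrodalGenerators p S :=
  ⟨hgS, 1, le_rfl, fun _ => T, fun _ => g, fun _ _ => ⟨hT, hTS⟩, fun _ _ _ => hg,
    by simp [partialProd], le_rfl, fun _ _ _ => by lia⟩

lemma mul_mul_mem_grodalGenerators (hP : P ≠ ⊥) (hPT : P ≤ T) (hTS : T ≤ S) {h h' t : G}
    (hh : h ∈ pResidual p (normalizer (T : Set G))) (hhP : h ∈ normalizer (P : Set G))
    (hh' : h' ∈ pResidual p (normalizer (P : Set G)))
    (ht : t ∈ pResidual p (normalizer (T : Set G)))
    (hS : h * h' * t ∈ normalizer (S : Set G)) : h * h' * t ∈ GrodalGenerators p S := by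
  refine ⟨hS, 3, by norm_num, fun i => if i = 0 ∨ i = 2 then P else T,
    fun i => if i = 1 then h else if i = 2 then h' else t, ?_, ?_, ?_, ?_, ?_⟩
  · intro i _
    dsimp only
    split_ifs
    · exact ⟨hP, hPT.trans hTS⟩
    · exact ⟨ne_bot_of_le_ne_bot hP hPT, hTS⟩
  · intro i hi hi3
    interval_cases i
    · simpa using hh
    · simpa using hh'
    · simpa using ht
  · simp [partialProd, List.range_succ, mul_assoc]
  · simpa using hPT
  · intro i hi hi2 x hx
    have hxP : x ∈ P := by simpa using hx
    interval_cases i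
    · simpa [partialProd] using (mem_normalizer_iff''.mp hhP x).mp hxP
    · have hhh' := mul_mem hhP (pResidual_le p _ hh')
      simpa [partialProd, List.range_succ] using hPT ((mem_normalizer_iff''.mp hhh' x).mp hxP)

end GrodalGenerators

/-- `Ω₁(S) ∩ Z(S)`, the subgroup denoted `Z` in the theorem. -/
abbrev omega1Center {G : Type*} [Group G] (p : ℕ) (S : Subgroup G) : Subgroup G :=
  omega1 p S ⊓ (S ⊓ centralizer (S : Set G))

lemma orderOf_inv_mul_mul {G : Type*} [Group G] (a g : G) : orderOf (g⁻¹ * a * g) = orderOf a := by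
  simpa using MulEquiv.orderOf_eq (MulAut.conj g⁻¹) a

section Fusion

variable {G : Type*} [Group G] {p : ℕ} {S : Subgroup G}

lemma omega1_le (p : ℕ) (S : Subgroup G) : omega1 p S ≤ S :=
  (closure_le _).mpr fun _ hg => hg.1

lemma omega1_mono {T : Subgroup G} (hTS : T ≤ S) : omega1 p T ≤ omega1 p S :=
  Subgroup.closure_mono fun _ hg => ⟨hTS hg.1, hg.2⟩

lemma mem_omega1_of_orderOf_eq {a : G} (ha : a ∈ S) (hap : orderOf a = p) : a ∈ omega1 p S :=
  subset_closure ⟨ha, hap ▸ pow_orderOf_eq_one a⟩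

lemma le_pResidual_normalizer_omega1 (hS : IsPGroup p S) :
    S ≤ pResidual p (normalizer (omega1 p S : Set G)) :=
  le_pResidual_of_isPGroup hS (le_normalizer.trans (normalizer_le_normalizer_omega1 p S))

variable [Fact p.Prime]

lemma pResidual_normalizer_le_or {Z T : Subgroup G} (hF : IsFlag p Z (omega1 p S))
    (hTS : T ≤ S) {a : G} (ha : a ∈ T) (hap : orderOf a = p) :
    pResidual p (normalizer (T : Set G)) ≤ pResidual p (normalizer (omega1 p S : Set G)) ∨
      pResidual p (normalizer (T : Set G)) ≤ pResidual p (centralizer {a}) := by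
  have hT := normalizer_le_normalizer_omega1 p T
  by_cases heq : omega1 p T = omega1 p S
  · exact Or.inl (pResidual_mono (heq ▸ hT))
  · refine Or.inr ((pResidual_mono hT).trans ?_)
    rw [← eq_of_card_eq_prime_of_le_of_ne ((Nat.card_zpowers a).trans hap)
      (zpowers_le.mpr (mem_omega1_of_orderOf_eq ha hap)) (omega1_mono hTS) hF.card_right heq]
    exact pResidual_normalizer_zpowers_le (hap ▸ pow_orderOf_eq_one a)

lemma IsFusionWalk.mem_pResidual_normalizer {Z : Subgroup G} (hF : IsFlag p Z (omega1 p S))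
    (hN : normalizer (omega1 p S : Set G) ≤ normalizer (Z : Set G)) {a w : G} (ha : a ∈ Z)
    (hap : orderOf a = p) (hw : IsFusionWalk p S a w) :
    w ∈ pResidual p (normalizer (Z : Set G)) := by
  induction hw with
  | one => exact one_mem _
  | @mul w g T _ hTS hwT hg ih =>
    refine mul_mem ih ?_
    have hbZ : w⁻¹ * a * w ∈ Z := (mem_normalizer_iff''.mp (pResidual_le p _ ih) a).mp ha
    have hbp : orderOf (w⁻¹ * a * w) = p := (orderOf_inv_mul_mul a w).trans hap
    have hb1 : w⁻¹ * a * w ≠ 1 := by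
      rw [Ne, ← orderOf_eq_one_iff, hbp]
      exact (Fact.out : p.Prime).ne_one
    rcases pResidual_normalizer_le_or hF hTS hwT hbp with hT | hT
    · exact pResidual_mono hN (hT hg)
    · rw [← zpowers_eq_of_card_eq_prime hF.card_left hbZ hb1]
      exact pResidual_mono (centralizer_singleton_le_normalizer_zpowers _) (hT hg)

lemma pResidual_normalizer_omega1_le_seriesStabilizer {Z : Subgroup G}
    (hF : IsFlag p Z (omega1 p S))
    (hN : normalizer (omega1 p S : Set G) ≤ normalizer (Z : Set G)) :
    pResidual p (normalizer (omega1 p S : Set G)) ≤ seriesStabilizer Z (omega1 p S) := by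
  refine (closure_le _).mpr fun g hg => ?_
  obtain ⟨hgE, n, hn⟩ := hg
  exact hF.mem_seriesStabilizer hn hgE (hN hgE)

lemma exists_mem_conj_eq_mul (hS : IsPGroup p S) (hF : IsFlag p (omega1Center p S) (omega1 p S))
    (hN : normalizer (omega1 p S : Set G) ≤ normalizer (omega1Center p S : Set G)) {u z : G}
    (hu : u ∈ omega1 p S) (huZ : u ∉ omega1Center p S) (hz : z ∈ omega1Center p S) :
    ∃ s ∈ S, s⁻¹ * u * s = u * z := by
  obtain ⟨s, hs, hsu⟩ : ∃ s ∈ S, s⁻¹ * u * s ≠ u := by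
    by_contra! hfix
    refine huZ ⟨hu, omega1_le p S hu, fun s hs => ?_⟩
    have hus := hfix s hs
    rwa [mul_assoc, inv_mul_eq_iff_eq_mul, eq_comm] at hus
  obtain ⟨k, hk⟩ := hF.exists_zpow_conj_eq_mul
    (pResidual_normalizer_omega1_le_seriesStabilizer hF hN (le_pResidual_normalizer_omega1 hS hs))
    hu hsu hz
  exact ⟨s ^ k, zpow_mem hs k, hk⟩

lemma exists_mul_eq_of_mem_pResidual_normalizer_omega1 (hS : IsPGroup p S)
    (hF : IsFlag p (omega1Center p S) (omega1 p S))
    (hN : normalizer (omega1 p S : Set G) ≤ normalizer (omega1Center p S : Set G)) {u k : G}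
    (hu : u ∈ omega1 p S) (huZ : u ∉ omega1Center p S)
    (hk : k ∈ pResidual p (normalizer (omega1 p S : Set G))) :
    ∃ c ∈ pResidual p (normalizer (omega1 p S : Set G)), c ∈ centralizer {u} ∧
      ∃ s ∈ S, c * s = k := by
  have hku := (inv_mem (pResidual_normalizer_omega1_le_seriesStabilizer hF hN hk)).2 u hu
  obtain ⟨s, hs, hsu⟩ := exists_mem_conj_eq_mul hS hF hN hu huZ hku
  refine ⟨k * s⁻¹, mul_mem hk (inv_mem (le_pResidual_normalizer_omega1 hS hs)), ?_, s, hs,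
    inv_mul_cancel_right k s⟩
  have hks : s⁻¹ * u * s = k⁻¹ * u * k := hsu.trans (by group)
  refine mem_centralizer_singleton_iff.mpr (mul_inv_eq_iff_eq_mul.mp ?_)
  calc k * s⁻¹ * u * (k * s⁻¹)⁻¹ = k * (s⁻¹ * u * s) * k⁻¹ := by group
    _ = u := by rw [hks]; group

lemma IsFusionWalk.exists_mul_mul_eq (hS : IsPGroup p S)
    (hF : IsFlag p (omega1Center p S) (omega1 p S))
    (hN : normalizer (omega1 p S : Set G) ≤ normalizer (omega1Center p S : Set G)) {u w : G}
    (hu : u ∈ omega1 p S) (huZ : u ∉ omega1Center p S) (hw : IsFusionWalk p S u w) :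
    ∃ h ∈ pResidual p (normalizer (omega1 p S : Set G)), h ∈ centralizer {u} ∧
      ∃ h' ∈ pResidual p (centralizer {u}), ∃ s ∈ S, h * h' * s = w := by
  have hup : orderOf u = p := orderOf_eq_prime (hF.pow_eq_one u hu) fun hu1 =>
    huZ (hu1 ▸ one_mem _)
  induction hw with
  | one => exact ⟨1, one_mem _, one_mem _, 1, one_mem _, 1, one_mem _, by group⟩
  | @mul w g T _ hTS hwT hg ih =>
    obtain ⟨h, hh, hhu, h', hh', s, hs, rfl⟩ := ih
    have hconj : (h * h' * s)⁻¹ * u * (h * h' * s) = s⁻¹ * u * s := by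
      have hfix := mem_centralizer_singleton_iff.mp (mul_mem hhu (pResidual_le p _ hh'))
      calc _ = s⁻¹ * ((h * h')⁻¹ * (u * (h * h'))) * s := by group
        _ = s⁻¹ * u * s := by rw [← hfix, inv_mul_cancel_left]
    rw [hconj] at hwT
    rcases pResidual_normalizer_le_or hF hTS hwT ((orderOf_inv_mul_mul u s).trans hup)
      with hT | hT
    · obtain ⟨c, hc, hcu, s', hs', hcs⟩ := exists_mul_eq_of_mem_pResidual_normalizer_omega1
        hS hF hN hu huZ (mul_mem (le_pResidual_normalizer_omega1 hS hs) (hT hg))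
      refine ⟨h * c, mul_mem hh hc, mul_mem hhu hcu, c⁻¹ * h' * c⁻¹⁻¹,
        conj_mem_pResidual (fun x hx => mul_mem (mul_mem (inv_mem hcu) hx)
          (inv_mem (inv_mem hcu))) hh', s', hs', ?_⟩
      calc h * c * (c⁻¹ * h' * c⁻¹⁻¹) * s' = h * h' * (c * s') := by group
        _ = h * h' * s * g := by rw [hcs, mul_assoc (h * h')]
    · refine ⟨h, hh, hhu, h' * (s * g * s⁻¹), mul_mem hh' (conj_mem_pResidual ?_ (hT hg)), s, hs,
        by group⟩
      intro x hx
      rw [mem_centralizer_singleton_iff] at hx ⊢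
      calc s * x * s⁻¹ * u = s * (x * (s⁻¹ * u * s)) * s⁻¹ := by group
        _ = u * (s * x * s⁻¹) := by rw [hx]; group

lemma exists_mul_eq_of_mem_grodalGenerators (hS : IsPGroup p S)
    (hF : IsFlag p (omega1Center p S) (omega1 p S))
    (hN : normalizer (omega1 p S : Set G) ≤ normalizer (omega1Center p S : Set G)) {u g : G}
    (hu : u ∈ omega1 p S) (huZ : u ∉ omega1Center p S) (hg : g ∈ GrodalGenerators p S) :
    g ∈ pResidual p (normalizer (omega1Center p S : Set G)) ∨
      ∃ s ∈ S, ∃ h ∈ pResidual p (normalizer (omega1 p S : Set G)), h ∈ centralizer {u} ∧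
        ∃ h' ∈ pResidual p (centralizer {u}), ∃ t ∈ S, s * (h * h' * t) = g := by
  obtain ⟨a, ha, hap, hw⟩ := exists_isFusionWalk_of_mem_grodalGenerators hS hg
  by_cases haZ : a ∈ omega1Center p S
  · exact Or.inl (hw.mem_pResidual_normalizer hF hN haZ hap)
  · obtain ⟨k, z, hz, rfl⟩ := hF.exists_zpow_mul_eq (mem_omega1_of_orderOf_eq ha hap) haZ hu
    obtain ⟨s, hs, hsu⟩ := exists_mem_conj_eq_mul hS hF hN hu huZ (inv_mem hz)
    rw [mul_inv_cancel_right] at hsu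
    have hwalk : IsFusionWalk p S (a ^ k * z) (1 * s * g) := by
      have hsS := le_pResidual_of_isPGroup hS le_normalizer hs
      refine (IsFusionWalk.one.mul le_rfl ?_ hsS).trans ?_
      · simpa using omega1_le p S hu
      · simpa only [one_mul, hsu] using hw.zpow k
    obtain ⟨h, hh, hhu, h', hh', t, ht, hwt⟩ := hwalk.exists_mul_mul_eq hS hF hN hu huZ
    exact Or.inr ⟨s⁻¹, inv_mem hs, h, hh, hhu, h', hh', t, ht, by rw [hwt]; group⟩

theorem grodalSubgroup_eq_closure (hS : IsPGroup p S)
    (hF : IsFlag p (omega1Center p S) (omega1 p S))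
    (hN : normalizer (omega1 p S : Set G) ≤ normalizer (omega1Center p S : Set G))
    {Q : Subgroup G} (hQE : Q ≤ omega1 p S) (hQcard : Nat.card Q = p)
    (hQZ : ¬ Q ≤ S ⊓ centralizer (S : Set G)) :
    grodalSubgroup p S = Subgroup.closure
      (((normalizer (S : Set G) ⊓ pResidual p (normalizer (omega1Center p S : Set G)) :
          Subgroup G) : Set G) ∪
        {g | g ∈ normalizer (S : Set G) ∧ ∃ h h' t : G,
          h ∈ pResidual p (normalizer (omega1 p S : Set G)) ∧ h ∈ centralizer (Q : Set G) ∧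
          h' ∈ pResidual p (centralizer (Q : Set G)) ∧ t ∈ S ∧ g = h * h' * t}) := by
  obtain ⟨u, huQ, huZ'⟩ := SetLike.not_le_iff_exists.mp hQZ
  have hu1 : u ≠ 1 := fun h => huZ' (h ▸ one_mem _)
  have huE := hQE huQ
  have huZ : u ∉ omega1Center p S := fun h => huZ' h.2
  obtain rfl := zpowers_eq_of_card_eq_prime hQcard huQ hu1
  rw [zpowers_eq_closure, centralizer_closure]
  refine le_antisymm ((closure_le _).mpr fun g hg => ?_) ((closure_le _).mpr ?_)
  · rcases exists_mul_eq_of_mem_grodalGenerators hS hF hN huE huZ hg with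
      hgZ | ⟨s, hs, h, hh, hhu, h', hh', t, ht, rfl⟩
    · exact subset_closure (Or.inl ⟨hg.1, hgZ⟩)
    · have hsS : s ∈ normalizer (S : Set G) := le_normalizer hs
      refine mul_mem (subset_closure (Or.inl ⟨hsS, ?_⟩)) (subset_closure (Or.inr ⟨?_, h, h', t, hh,
        hhu, hh', ht, rfl⟩))
      · exact pResidual_mono hN (le_pResidual_normalizer_omega1 hS hs)
      · exact (mul_mem_cancel_left hsS).mp hg.1
  · rintro g (⟨hgS, hgZ⟩ | ⟨hgS, h, h', t, hh, hhu, hh', ht, rfl⟩)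
    · refine subset_closure (mem_grodalGenerators_of_mem_pResidual ?_ (inf_le_left.trans
        (omega1_le p S)) hgS hgZ)
      rw [Ne, eq_bot_iff_card, hF.card_left]
      exact (Fact.out : p.Prime).ne_one
    · have hCN := centralizer_singleton_le_normalizer_zpowers u
      exact subset_closure (mul_mul_mem_grodalGenerators (zpowers_ne_bot.mpr hu1) hQE
        (omega1_le p S) hh (hCN hhu) (pResidual_mono hCN hh')
        (le_pResidual_normalizer_omega1 hS ht) hgS)

end Fusion

theorem stmt17_general (p : ℕ) [Fact p.Prime] (hodd : Odd p) {G : Type*} [Group G] [Finite G]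
    (S : Sylow p G) (hsplit : IsSplitMetacyclic (S : Subgroup G))
    (hE : ¬omega1 p (S : Subgroup G) ≤
      (S : Subgroup G) ⊓ Subgroup.centralizer ((S : Subgroup G) : Set G))
    (Q : Subgroup G) (hQE : Q ≤ omega1 p (S : Subgroup G)) (hQcard : Nat.card Q = p)
    (hQZ : ¬Q ≤ (S : Subgroup G) ⊓ Subgroup.centralizer ((S : Subgroup G) : Set G)) :
    grodalSubgroup p (S : Subgroup G) =
      Subgroup.closure
        (((Subgroup.normalizer ((S : Subgroup G) : Set G) ⊓
            pResidual p (Subgroup.normalizer ((omega1 p (S : Subgroup G) ⊓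
              ((S : Subgroup G) ⊓ Subgroup.centralizer ((S : Subgroup G) : Set G)) :
                Subgroup G) : Set G)) :
              Subgroup G) : Set G) ∪
          {g : G | g ∈ Subgroup.normalizer ((S : Subgroup G) : Set G) ∧ ∃ h h' t : G,
            h ∈ pResidual p (Subgroup.normalizer (omega1 p (S : Subgroup G) : Set G)) ∧
            h ∈ Subgroup.centralizer (Q : Set G) ∧
            h' ∈ pResidual p (Subgroup.centralizer (Q : Set G)) ∧
            t ∈ (S : Subgroup G) ∧ g = h * h' * t}) := by
  obtain ⟨N, q, z, hframe⟩ := hsplit.exists_isOmegaFrame_subgroup hodd S.isPGroup' hE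
  have hZ : omega1Center p (S : Subgroup G) = zpowers z := hframe.omega1_inf_center_eq
  refine grodalSubgroup_eq_closure S.isPGroup' ?_ ?_ hQE hQcard hQZ
  · rw [hZ]
    exact hframe.isFlag
  · rw [hZ]
    exact hframe.normalizer_omega1_le hodd

theorem stmt17 (p : ℕ) [Fact p.Prime] (hodd : Odd p) {G : Type*} [Group G] [Fintype G]
    (hdvd : p ∣ Fintype.card G) (S : Sylow p G)
    (hsplit : IsSplitMetacyclic (S : Subgroup G))
    (hE : ¬omega1 p (S : Subgroup G) ≤
      (S : Subgroup G) ⊓ Subgroup.centralizer ((S : Subgroup G) : Set G))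
    (hspe : ¬∃ H : Subgroup G, H ≠ ⊤ ∧ IsStronglyPEmbedded p H)
    (Q : Subgroup G) (hQE : Q ≤ omega1 p (S : Subgroup G)) (hQcard : Nat.card Q = p)
    (hQZ : ¬Q ≤ (S : Subgroup G) ⊓ Subgroup.centralizer ((S : Subgroup G) : Set G)) :
    grodalSubgroup p (S : Subgroup G) =
      Subgroup.closure
        (((Subgroup.normalizer ((S : Subgroup G) : Set G) ⊓
            pResidual p (Subgroup.normalizer ((omega1 p (S : Subgroup G) ⊓
              ((S : Subgroup G) ⊓ Subgroup.centralizer ((S : Subgroup G) : Set G)) :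
                Subgroup G) : Set G)) :
              Subgroup G) : Set G) ∪
          {g : G | g ∈ Subgroup.normalizer ((S : Subgroup G) : Set G) ∧ ∃ h h' t : G,
            h ∈ pResidual p (Subgroup.normalizer (omega1 p (S : Subgroup G) : Set G)) ∧
            h ∈ Subgroup.centralizer (Q : Set G) ∧
            h' ∈ pResidual p (Subgroup.centralizer (Q : Set G)) ∧
            t ∈ (S : Subgroup G) ∧ g = h * h' * t}) :=
  stmt17_general p hodd S hsplit hE Q hQE hQcard hQZ
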